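/- A periodic matrix A (over ℚ, an algebraically closed field, or a field of prime characteristic) is the sum of a torsion matrix and a square-zero matrix if and only if rank(A) ≥ n/2. -/

import Mathlib

namespace PTS
open Polynomial
variable {F : Type*} [Field F]
variable {E Z V : Type*} [AddCommGroup E] [Module F E] [AddCommGroup Z] [Module F Z] [AddCommGroup V] [Module F V]

/-- The endomorphism `[[C, ν], [φ, 0]]` of `E × Z`. -/
def blk (C : Module.End F E) (φ : E →ₗ[F] Z) (ν : Z →ₗ[F] E) : Module.End F (E × Z) :=
  LinearMap.prod (C.coprod ν) (φ.coprod 0)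

theorem blk_apply (C : Module.End F E) (φ : E →ₗ[F] Z) (ν : Z →ₗ[F] E) (x : E × Z) :
    blk C φ ν x = (C x.1 + ν x.2, φ x.1) := by simp [blk]

/-- `C` can be bordered to a torsion endomorphism of `E × Z`. -/
def Bord (C : Module.End F E) (Z : Type*) [AddCommGroup Z] [Module F Z] : Prop :=
  ∃ (φ : E →ₗ[F] Z) (ν : Z →ₗ[F] E) (s : ℕ), 1 ≤ s ∧ blk C φ ν ^ s = 1

theorem pow_intertwine {A B : Type*} [AddCommGroup A] [Module F A] [AddCommGroup B] [Module F B]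
    (S : Module.End F A) (T : Module.End F B) (f : A →ₗ[F] B)
    (h : ∀ x, f (S x) = T (f x)) (s : ℕ) (x : A) : f ((S ^ s) x) = (T ^ s) (f x) := by
  induction s generalizing x with
  | zero => simp
  | succ s ih => rw [pow_succ, pow_succ, Module.End.mul_apply, Module.End.mul_apply, ih, h]

theorem bord_of_model (C : Module.End F E) (T : Module.End F V) (s : ℕ) (hs : 1 ≤ s)
    (hT : T ^ s = 1) (i : E →ₗ[F] V) (j : Z →ₗ[F] V)
    (hbij : Function.Bijective (i.coprod j))
    (hi : ∀ e, ∃ f, T (i e) = i (C e) + j f) (hj : ∀ f, ∃ e, T (j f) = i e) : Bord C Z := by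
  let Θ := LinearEquiv.ofBijective (i.coprod j) hbij
  have hΘ : ∀ x, Θ x = i x.1 + j x.2 := fun x => by simp [Θ]
  let S : Module.End F (E × Z) := Θ.symm.toLinearMap ∘ₗ T ∘ₗ Θ.toLinearMap
  have hS : ∀ x, Θ (S x) = T (Θ x) := fun x => by simp [S]
  refine ⟨LinearMap.snd F E Z ∘ₗ S ∘ₗ LinearMap.inl F E Z,
    LinearMap.fst F E Z ∘ₗ S ∘ₗ LinearMap.inr F E Z, s, hs, ?_⟩
  have key : blk C (LinearMap.snd F E Z ∘ₗ S ∘ₗ LinearMap.inl F E Z)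
    (LinearMap.fst F E Z ∘ₗ S ∘ₗ LinearMap.inr F E Z) = S := by
    have h1 : ∀ e, (S (e, 0)).1 = C e := by
      intro e
      obtain ⟨f, hf⟩ := hi e
      have : S (e, 0) = (C e, f) := by
        apply Θ.injective
        rw [hS, hΘ, hΘ]; simp [hf]
      rw [this]
    have h2 : ∀ f, (S (0, f)).2 = 0 := by
      intro f
      obtain ⟨e, he⟩ := hj f
      have : S (0, f) = (e, 0) := by
        apply Θ.injective
        rw [hS, hΘ, hΘ]; simp [he]
      rw [this]
    refine LinearMap.ext fun x => ?_
    have hx : S x = S (x.1, 0) + S (0, x.2) := by rw [← map_add]; simp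
    rw [blk_apply, hx]
    ext
    · simp [h1]
    · simp [h2]
  rw [key]
  refine LinearMap.ext fun x => ?_
  apply Θ.injective
  have := pow_intertwine S T Θ.toLinearMap hS s x
  simpa [hT] using this

theorem Bord.transport {E' Z' : Type*} [AddCommGroup E'] [Module F E'] [AddCommGroup Z']
    [Module F Z'] {C : Module.End F E} {C' : Module.End F E'} (h : Bord C Z)
    (e : E' ≃ₗ[F] E) (he : ∀ x, e (C' x) = C (e x)) (g : Z' ≃ₗ[F] Z) : Bord C' Z' := by
  obtain ⟨φ, ν, s, hs, hT⟩ := h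
  refine bord_of_model C' (blk C φ ν) s hs hT (LinearMap.inl F E Z ∘ₗ e.toLinearMap)
    (LinearMap.inr F E Z ∘ₗ g.toLinearMap) ?_ ?_ ?_
  · convert (e.prodCongr g).bijective using 1
    ext x <;> simp
  · intro x
    refine ⟨g.symm (φ (e x)), ?_⟩
    simp [blk_apply, he]
  · intro f
    refine ⟨e.symm (ν (g f)), ?_⟩
    simp [blk_apply]

theorem bord_pi {ι : Type*} [Fintype ι] {E Z : ι → Type*} [∀ i, AddCommGroup (E i)]
    [∀ i, Module F (E i)] [∀ i, AddCommGroup (Z i)] [∀ i, Module F (Z i)]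
    (C : ∀ i, Module.End F (E i)) (h : ∀ i, Bord (C i) (Z i)) :
    Bord (LinearMap.pi fun i => C i ∘ₗ LinearMap.proj i) (∀ i, Z i) := by
  choose φ ν s hs hT using h
  refine ⟨LinearMap.pi fun i => φ i ∘ₗ LinearMap.proj i,
    LinearMap.pi fun i => ν i ∘ₗ LinearMap.proj i, ∏ i, s i,
    Finset.one_le_prod' fun i _ => hs i, ?_⟩
  refine LinearMap.ext fun x => ?_
  have key : ∀ i, (fun y : (∀ i, E i) × (∀ i, Z i) => (y.1 i, y.2 i)) _ = _ := fun i =>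
    pow_intertwine (blk (LinearMap.pi fun i => C i ∘ₗ LinearMap.proj i)
      (LinearMap.pi fun i => φ i ∘ₗ LinearMap.proj i)
      (LinearMap.pi fun i => ν i ∘ₗ LinearMap.proj i)) (blk (C i) (φ i) (ν i))
      (LinearMap.prodMap (LinearMap.proj i) (LinearMap.proj i))
      (fun x => by simp [blk_apply]) (∏ i, s i) x
  have key2 : ∀ i, blk (C i) (φ i) (ν i) ^ (∏ i, s i) = 1 := fun i => by
    obtain ⟨c, hc⟩ := Finset.dvd_prod_of_mem s (Finset.mem_univ i)
    rw [hc, pow_mul, hT, one_pow]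
  ext i
  · have := congrArg Prod.fst (key i); simpa [key2] using this
  · have := congrArg Prod.snd (key i); simpa [key2] using this

/-- `C` torsion, no bordering needed -/
theorem bord_zero (C : Module.End F E) (s : ℕ) (hs : 1 ≤ s) (hC : C ^ s = 1) [Subsingleton Z] :
    Bord C Z := by
  refine ⟨0, 0, s, hs, LinearMap.ext fun x => ?_⟩
  have := pow_intertwine (blk C (0 : E →ₗ[F] Z) 0) C (LinearMap.fst F E Z)
    (fun x => by simp [blk_apply]) s x
  ext
  · simpa [hC] using this
  · exact Subsingleton.elim _ _

theorem bord_self (C : Module.End F E) (s : ℕ) (hs : 1 ≤ s) (hC : C ^ s = 1) : Bord C E := by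
  refine ⟨1, -C ^ 2, 6 * s, by omega, ?_⟩
  have h3 : ∀ x, (blk C 1 (-C ^ 2) ^ 3) x = (- (C ^ 3) x.1, - (C ^ 3) x.2) := by
    intro x
    simp only [pow_succ, pow_zero, one_mul, Module.End.mul_apply, blk_apply, LinearMap.neg_apply,
      Module.End.one_apply, map_add, map_neg]
    ext <;> simp
  have h6 : ∀ x, (blk C 1 (-C ^ 2) ^ 6) x = ((C ^ 6) x.1, (C ^ 6) x.2) := by
    intro x
    rw [show 6 = 3 + 3 from rfl, pow_add, Module.End.mul_apply, h3, h3, pow_add]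
    simp
  have h6s : ∀ t x, (blk C 1 (-C ^ 2) ^ (6 * t)) x = ((C ^ (6 * t)) x.1, (C ^ (6 * t)) x.2) := by
    intro t
    induction t with
    | zero => simp
    | succ t ih => intro x; rw [mul_add, mul_one, pow_add, Module.End.mul_apply, h6, ih, pow_add]; simp
  refine LinearMap.ext fun x => ?_
  rw [h6s, mul_comm, pow_mul, hC]; simp

theorem bord_nil_two (h2 : (2 : F) = 0) (C : Module.End F E) (r : ℕ) (hC : C ^ r = 0) :
    Bord C E := by
  have : CharP F 2 := CharTwo.of_one_ne_zero_of_two_eq_zero one_ne_zero h2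
  set T := blk C (1 : Module.End F E) 1 with hTd
  refine ⟨1, 1, 2 * 2 ^ r, Nat.one_le_iff_ne_zero.mpr (by positivity), ?_⟩
  have h1 : ∀ x, (T ^ 2 - 1 : Module.End F (E × E)) x = (C (T x).1, C (T x).2) := by
    intro x
    simp only [pow_two, hTd, blk_apply, LinearMap.sub_apply, Module.End.mul_apply, Module.End.one_apply]
    ext <;> simp
  have h1' : ∀ (k : ℕ) x, ((T ^ 2 - 1 : Module.End F (E × E)) ^ k) x = ((C ^ k) ((T ^ k) x).1, (C ^ k) ((T ^ k) x).2) := by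
    have hc : ∀ k x, (T ((C ^ k) x.1, (C ^ k) x.2)) = ((C ^ k) (T x).1, (C ^ k) (T x).2) := by
      intro k x
      simp only [hTd, blk_apply, Module.End.one_apply, map_add]
      rw [← Module.End.mul_apply, ← Module.End.mul_apply, ← pow_succ, ← pow_succ']
    intro k
    induction k with
    | zero => simp
    | succ k ih =>
      intro x
      rw [pow_succ', Module.End.mul_apply, ih, h1, hc, pow_succ' C, pow_succ' T]
      simp
  have h0 : (T ^ 2 - 1 : Module.End F (E × E)) ^ (2 ^ r) = 0 := by
    refine LinearMap.ext fun x => ?_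
    rw [h1', pow_eq_zero_of_le (Nat.lt_two_pow_self).le hC]
    simp
  have hpoly : (X ^ (2 * 2 ^ r) - 1 : F[X]) = (X ^ 2 - 1) ^ (2 ^ r) := by
    rw [sub_pow_char_pow, one_pow, pow_mul]
  have := congrArg (aeval T) hpoly
  simp only [map_sub, map_pow, aeval_X, map_one] at this
  rw [h0] at this
  exact sub_eq_zero.mp this

theorem pow_eq_of_cyc {r : ℕ} (b : Module.Basis (Fin r) F E) (hr : 0 < r) (a : Module.End F E)
    (w : ℕ → F) (hw : ∀ k, w k ≠ 0) (ha : ∀ k (hk : k < r), (a ^ k) (b ⟨0, hr⟩) = w k • b ⟨k, hk⟩)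
    (c : F) (hc : (a ^ r) (b ⟨0, hr⟩) = c • b ⟨0, hr⟩) : ∀ x, (a ^ r) x = c • x := by
  have : a ^ r = c • (1 : Module.End F E) := by
    refine b.ext fun k => ?_
    have hk : b k = (w k)⁻¹ • (a ^ (k : ℕ)) (b ⟨0, hr⟩) := by
      rw [ha k k.2, smul_smul, inv_mul_cancel₀ (hw k), one_smul]
    have hcomm : (a ^ r) ((a ^ (k : ℕ)) (b ⟨0, hr⟩)) = (a ^ (k : ℕ)) ((a ^ r) (b ⟨0, hr⟩)) := by
      rw [← Module.End.mul_apply, ← Module.End.mul_apply, ← pow_add, ← pow_add, add_comm]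
    rw [hk, map_smul, hcomm, hc]
    rw [map_smul, LinearMap.smul_apply, Module.End.one_apply, smul_comm]
  intro x; rw [this]; simp

theorem bord_nil (h2 : (2 : F) ≠ 0) (C : Module.End F E) (r : ℕ) (hr : 0 < r)
    (b : Module.Basis (Fin r) F E) (v : E)
    (hb : ∀ k, b k = (C ^ (k : ℕ)) v) (hC : C ^ r = 0) :
    Bord C E := by
  have hv : b ⟨0, hr⟩ = v := by simp [hb]
  -- the rank one perturbation
  let R : F → Module.End F E := fun c =>
    b.constr F (fun k => if (k : ℕ) + 1 = r then c • v else 0)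
  have hR : ∀ c k (hk : k < r), R c (b ⟨k, hk⟩) = if k + 1 = r then c • v else 0 := by
    intro c k hk; simp only [R, Module.Basis.constr_basis]
  let a : F → Module.End F E := fun c => (2 : F)⁻¹ • C + R c
  have ha1 : ∀ c k (hk : k < r), ((a c) ^ k) (b ⟨0, hr⟩) = ((2 : F)⁻¹ ^ k) • b ⟨k, hk⟩ := by
    intro c k
    induction k with
    | zero => intro hk; simp
    | succ k ih =>
      intro hk
      rw [pow_succ', Module.End.mul_apply, ih (by omega), map_smul]
      simp only [a, LinearMap.add_apply, hR, LinearMap.smul_apply]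
      rw [if_neg (by omega), hb, hb, add_zero, smul_smul, ← pow_succ]
      simp only [pow_succ' C, Module.End.mul_apply]
  have har : ∀ c, ((a c) ^ r) (b ⟨0, hr⟩) = ((2 : F)⁻¹ ^ (r - 1) * c) • b ⟨0, hr⟩ := by
    intro c
    obtain ⟨r', rfl⟩ : ∃ r', r = r' + 1 := ⟨r - 1, by omega⟩
    rw [pow_succ', Module.End.mul_apply, ha1 c r' (by omega), map_smul]
    simp only [a, LinearMap.add_apply, hR, LinearMap.smul_apply]
    rw [if_pos trivial, hb, ← Module.End.mul_apply, ← pow_succ', hC, hv]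
    simp [smul_smul]
  have haX : ∀ c x, ((a c) ^ r) x = ((2 : F)⁻¹ ^ (r - 1) * c) • x := fun c =>
    pow_eq_of_cyc b hr (a c) (fun k => (2 : F)⁻¹ ^ k) (fun k => pow_ne_zero _ (inv_ne_zero h2))
      (ha1 c) _ (har c)
  have hA : ∀ x, ((a (2 ^ (r - 1))) ^ r) x = x := by
    intro x; rw [haX, ← mul_pow, inv_mul_cancel₀ h2]; simp
  have hD : ∀ x, ((a (-2 ^ (r - 1))) ^ r) x = - x := by
    intro x; rw [haX, mul_neg, ← mul_pow, inv_mul_cancel₀ h2]; simp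
  have hsum : ∀ x, a (2 ^ (r - 1)) x + a (-2 ^ (r - 1)) x = C x := by
    intro x
    have : a (2 ^ (r - 1)) + a (-2 ^ (r - 1)) = C := by
      refine b.ext fun k => ?_
      simp only [a, LinearMap.add_apply, LinearMap.smul_apply]
      have h1 := hR (2 ^ (r - 1)) k k.2
      have h3 := hR (-2 ^ (r - 1)) k k.2
      rw [Fin.eta] at h1 h3
      rw [h1, h3]
      have h4 : (2 : F)⁻¹ + 2⁻¹ = 1 := by field_simp; norm_num
      have : (2 : F)⁻¹ • C (b k) + (2 : F)⁻¹ • C (b k) = C (b k) := by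
        rw [← add_smul, h4, one_smul]
      split_ifs
      · rw [neg_smul]; nth_rewrite 3 [← this]; abel
      · simpa using this
    rw [← this]; rfl
  set A := a (2 ^ (r - 1))
  set D := a (-2 ^ (r - 1))
  let T : Module.End F (E × E) := LinearMap.prod (A ∘ₗ LinearMap.fst F E E)
    (LinearMap.fst F E E + D ∘ₗ LinearMap.snd F E E)
  have hT : ∀ x, T x = (A x.1, x.1 + D x.2) := fun x => by simp [T]
  have hTk : ∀ k, ∃ S : Module.End F E, ∀ x, (T ^ k) x = ((A ^ k) x.1, S x.1 + (D ^ k) x.2) := by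
    intro k
    induction k with
    | zero => exact ⟨0, fun x => by simp⟩
    | succ k ih =>
      obtain ⟨S, hS⟩ := ih
      refine ⟨A ^ k + D * S, fun x => ?_⟩
      rw [pow_succ', Module.End.mul_apply, hS, hT, pow_succ' A, pow_succ' D]
      simp [add_assoc]
  obtain ⟨S, hS⟩ := hTk r
  refine bord_of_model C T (r + r) (by omega) ?_ (LinearMap.prod A 1) (LinearMap.inl F E E)
    ?_ ?_ ?_
  · refine LinearMap.ext fun x => ?_
    rw [pow_add, Module.End.mul_apply, hS, hS]
    simp [hA, hD]
  · constructor
    · rw [← LinearMap.ker_eq_bot, LinearMap.ker_eq_bot']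
      rintro ⟨e, f⟩ h
      have h1 : A e + f = 0 ∧ e = 0 := by simpa using h
      obtain ⟨h3, rfl⟩ := h1
      rw [map_zero, zero_add] at h3
      rw [h3]; rfl
    · rintro ⟨x, y⟩
      exact ⟨(y, x - A y), by simp⟩
  · intro e
    refine ⟨A (A e) - A (C e), ?_⟩
    rw [hT]
    simp [hsum]
  · intro f
    exact ⟨f, by rw [hT]; simp⟩
/-- The polynomials `X^(z-1-i) (X^2+1)^i`. -/
noncomputable def zet (F : Type*) [Field F] (z i : ℕ) : F[X] := X ^ (z - 1 - i) * (X ^ 2 + 1) ^ i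

/-- Their span for `i < z`. -/
noncomputable def Z0 (F : Type*) [Field F] (z : ℕ) : Submodule F F[X] :=
  LinearMap.range (Fintype.linearCombination F (fun i : Fin z => zet F z i))

theorem zet_mem {z i : ℕ} (h : i < z) : zet F z i ∈ Z0 F z := by
  rw [Z0, Fintype.range_linearCombination]
  exact Submodule.subset_span ⟨⟨i, h⟩, rfl⟩

theorem Z0_induction {z : ℕ} (S : Submodule F F[X]) (h : ∀ i < z, zet F z i ∈ S) : Z0 F z ≤ S := by
  rw [Z0, Fintype.range_linearCombination, Submodule.span_le]
  rintro _ ⟨i, rfl⟩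
  exact h i i.2

theorem X2_monic (n : ℕ) : ((X ^ 2 + 1 : F[X]) ^ n).Monic := by
  apply Monic.pow; monicity!

theorem X2_deg (n : ℕ) : ((X ^ 2 + 1 : F[X]) ^ n).natDegree = 2 * n := by
  rw [natDegree_pow, mul_comm]; congr 1; compute_degree!

theorem X_mul_Z0 {z : ℕ} {a : F[X]} (ha : a ∈ Z0 F z) : X * a ∈ Z0 F (z + 1) := by
  have := Z0_induction ((Z0 F (z + 1)).comap (LinearMap.mulLeft F (X : F[X]))) (z := z) (by
    intro i hi
    simp only [Submodule.mem_comap, LinearMap.mulLeft_apply]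
    have : X * zet F z i = zet F (z + 1) i := by
      rw [zet, zet, ← mul_assoc, ← pow_succ']; congr 2; omega
    rw [this]; exact zet_mem (by omega))
  exact this ha

theorem zet_last (z : ℕ) : zet F (z + 1) z = (X ^ 2 + 1) ^ z := by simp [zet]

theorem Z0_span (z : ℕ) (p : F[X]) (hp : p.degree < (2 * z : ℕ)) :
    ∃ a ∈ Z0 F z, ∃ b ∈ Z0 F z, p = a + X * b := by
  induction z generalizing p with
  | zero =>
    refine ⟨0, zero_mem _, 0, zero_mem _, ?_⟩
    simpa using hp
  | succ z ih =>
    set u : F[X] := (X ^ 2 + 1) ^ z with hu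
    have hum : u.Monic := X2_monic z
    have hud : u.natDegree = 2 * z := X2_deg z
    have hu0 : u.coeff 0 = 1 := by simp [hu, coeff_zero_eq_eval_zero]
    set p' := p - C (p.coeff (2 * z + 1)) * (X * u) - C (p.coeff 0) * u with hp'
    have h0 : p'.coeff 0 = 0 := by simp [hp', hu0]
    have hX : p' = X * p'.divX := by
      conv_lhs => rw [← divX_mul_X_add p', h0]
      simp [mul_comm]
    have hdeg : p'.divX.degree < (2 * z : ℕ) := by
      rw [degree_lt_iff_coeff_zero]
      intro k hk
      rw [coeff_divX, hp', coeff_sub, coeff_sub, coeff_C_mul, coeff_C_mul, coeff_X_mul]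
      rw [coeff_eq_zero_of_natDegree_lt (show u.natDegree < k + 1 by omega)]
      rcases Nat.eq_or_lt_of_le hk with h | h
      · subst h
        have : u.coeff (2 * z) = 1 := by rw [← hud]; exact hum
        simp [this]
      · rw [coeff_eq_zero_of_natDegree_lt (show u.natDegree < k by omega)]
        rw [degree_lt_iff_coeff_zero] at hp
        rw [hp (k + 1) (by omega)]; simp
    obtain ⟨a, ha, b, hb, hab⟩ := ih _ hdeg
    have hum' : u ∈ Z0 F (z + 1) := by rw [hu, ← zet_last]; exact zet_mem (by omega)
    refine ⟨X * a + p.coeff 0 • u, add_mem (X_mul_Z0 ha) (Submodule.smul_mem _ _ hum'),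
      X * b + p.coeff (2 * z + 1) • u, add_mem (X_mul_Z0 hb) (Submodule.smul_mem _ _ hum'), ?_⟩
    have : p = p' + C (p.coeff (2 * z + 1)) * (X * u) + C (p.coeff 0) * u := by rw [hp']; ring
    have h4 : p' = X * (a + X * b) := hX.trans (by rw [hab])
    simp only [smul_eq_C_mul]
    linear_combination this + h4

theorem Z0_degree {z : ℕ} (hz : 0 < z) {a : F[X]} (ha : a ∈ Z0 F z) :
    a.degree < (2 * z - 1 : ℕ) := by
  have := Z0_induction (degreeLT F (2 * z - 1)) (z := z) (by
    intro i hi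
    rw [mem_degreeLT]
    refine lt_of_le_of_lt degree_le_natDegree ?_
    rw [zet, ((monic_X_pow _).natDegree_mul (X2_monic i)), X2_deg, natDegree_X_pow]
    exact_mod_cast (by omega))
  exact mem_degreeLT.mp (this ha)

theorem coeff_divX_iter (q : F[X]) (n i : ℕ) : (divX^[n] q).coeff i = q.coeff (i + n) := by
  induction n generalizing i with
  | zero => rfl
  | succ n ih => rw [Function.iterate_succ_apply', coeff_divX, ih]; congr 1; omega

theorem horner (r : ℕ) (q : F[X]) (hq : q.natDegree ≤ r) (y t : ℕ → F[X])
    (hy : ∀ k, y (k + 1) = X * y k + t k) :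
    ∑ k ∈ Finset.range (r + 1), C (q.coeff k) * y k
      = q * y 0 + ∑ l ∈ Finset.range r, t l * divX^[l + 1] q := by
  induction r generalizing q y t with
  | zero =>
    rw [eq_C_of_natDegree_le_zero hq]; simp
  | succ r ih =>
    rw [Finset.sum_range_succ' (fun k => C (q.coeff k) * y k) (r+1),
      Finset.sum_range_succ' (fun l => t l * divX^[l+1] q) r]
    have h1 := ih q.divX (by rw [natDegree_divX_eq_natDegree_tsub_one]; omega) (fun k => y (k + 1))
      (fun k => t (k + 1)) (fun k => hy (k + 1))
    simp only [coeff_divX] at h1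
    rw [h1, hy 0]
    have h2 : q = q.divX * X + C (q.coeff 0) := (divX_mul_X_add q).symm
    simp only [Function.iterate_succ_apply, Function.iterate_zero, id]
    generalize q.divX = d at *
    generalize C (q.coeff 0) = c at *
    rw [h2]; ring

theorem solve (q : F[X]) (hq : q.Monic) (r : ℕ) (hr : q.natDegree = r) (z : ℕ) (hz : 0 < z)
    (j : ℕ) (hj : 1 ≤ j) (hjr : j + 1 ≤ r) (p : F[X]) (hp : p.degree < (2 * z + j - 1 : ℕ)) :
    ∃ t : ℕ → F[X], (∀ l, t l ∈ Z0 F z) ∧ (∀ l, l + j + 1 < r → t l = 0) ∧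
      ∑ l ∈ Finset.range r, t l * divX^[l + 1] q = p := by
  have hlast : divX^[r - 1 + 1] q = 1 := by
    ext i
    rw [coeff_divX_iter, coeff_one]
    split_ifs with h
    · subst h; rw [show 0 + (r - 1 + 1) = q.natDegree by omega]; exact hq
    · exact coeff_eq_zero_of_natDegree_lt (by omega)
  have hsingle : ∀ l < r, ∀ s : F[X],
      ∑ k ∈ Finset.range r, (Pi.single l s : ℕ → F[X]) k * divX^[k + 1] q = s * divX^[l + 1] q := by
    intro l hl s
    rw [Finset.sum_eq_single l]
    · simp
    · intro b _ hb; simp [Pi.single_eq_of_ne hb]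
    · intro h; exact absurd (Finset.mem_range.mpr hl) h
  have hmem : ∀ l s, s ∈ Z0 F z → ∀ k, (Pi.single l s : ℕ → F[X]) k ∈ Z0 F z := by
    intro l s hs k
    by_cases h : k = l
    · subst h; simpa using hs
    · simp [Pi.single_eq_of_ne h]
  induction j, hj using Nat.le_induction generalizing p with
  | base =>
    obtain ⟨a, ha, b, hb, hab⟩ := Z0_span z p (by simpa using hp)
    have hlast2 : divX^[r - 2 + 1] q = X + C (q.coeff (r - 1)) := by
      ext i
      rw [coeff_divX_iter, coeff_add, coeff_X, coeff_C]
      rcases i with _ | _ | i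
      · simp; congr 1; omega
      · rw [show 0 + 1 + (r - 2 + 1) = q.natDegree by omega]
        simpa using hq.leadingCoeff
      · simp; exact coeff_eq_zero_of_natDegree_lt (by omega)
    refine ⟨Pi.single (r - 1) (a - q.coeff (r - 1) • b) + Pi.single (r - 2) b, ?_, ?_, ?_⟩
    · intro l
      exact add_mem (hmem _ _ (sub_mem ha (Submodule.smul_mem _ _ hb)) _) (hmem _ _ hb _)
    · intro l hl
      simp [Pi.single_eq_of_ne (show l ≠ r - 1 by omega), Pi.single_eq_of_ne (show l ≠ r - 2 by omega)]
    · simp only [Pi.add_apply, add_mul, Finset.sum_add_distrib]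
      rw [hsingle _ (by omega), hsingle _ (by omega), hlast, hlast2, hab, smul_eq_C_mul]
      ring
  | succ j hj ih =>
    set h := divX^[r - 1 - (j + 1) + 1] q with hh
    have hhd : h.natDegree ≤ j + 1 := by
      rw [natDegree_le_iff_coeff_eq_zero]
      intro i hi
      rw [hh, coeff_divX_iter]
      exact coeff_eq_zero_of_natDegree_lt (by omega)
    have hhc : h.coeff (j + 1) = 1 := by
      rw [hh, coeff_divX_iter, show j + 1 + (r - 1 - (j + 1) + 1) = q.natDegree by omega]
      exact hq
    obtain ⟨z', rfl⟩ : ∃ z', z = z' + 1 := ⟨z - 1, by omega⟩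
    set u : F[X] := (X ^ 2 + 1) ^ z' with hu
    have hum : u.Monic := X2_monic z'
    have hud : u.natDegree = 2 * z' := X2_deg z'
    have huZ : u ∈ Z0 F (z' + 1) := by rw [hu, ← zet_last]; exact zet_mem (by omega)
    set c := p.coeff (2 * z' + (j + 1))
    obtain ⟨t, ht1, ht2, ht3⟩ := ih (by omega) (p - C c * (u * h)) (by
      rw [degree_lt_iff_coeff_zero] at hp ⊢
      intro k hk
      rw [coeff_sub, coeff_C_mul]
      rcases Nat.eq_or_lt_of_le hk with h' | h'
      · have hk' : k = 2 * z' + (j + 1) := by omega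
        rw [hk', coeff_mul_add_eq_of_natDegree_le hud.le hhd, hhc, ← hud, hum.coeff_natDegree, hud]
        simp [c]
      · rw [hp k (by omega), coeff_eq_zero_of_natDegree_lt]
        · simp
        · refine lt_of_le_of_lt natDegree_mul_le ?_
          omega)
    refine ⟨t + Pi.single (r - 1 - (j + 1)) (c • u), ?_, ?_, ?_⟩
    · intro l
      exact add_mem (ht1 l) (hmem _ _ (Submodule.smul_mem _ _ huZ) _)
    · intro l hl
      simp [Pi.single_eq_of_ne (show l ≠ r - 1 - (j + 1) by omega), ht2 l (by omega)]
    · simp only [Pi.add_apply, add_mul, Finset.sum_add_distrib]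
      rw [ht3, hsingle _ (by omega), smul_eq_C_mul]
      ring

theorem exists_seq (q Q : F[X]) (hq : q.Monic) (r : ℕ) (hr : q.natDegree = r) (z : ℕ) (hz : 0 < z)
    (hzr : z < r) (hQ : Q.Monic) (hQd : Q.natDegree = r + z)
    (hn : Q.coeff (r + z - 1) = q.coeff (r - 1)) :
    ∃ y t : ℕ → F[X], (∀ k, y (k + 1) = X * y k + t k) ∧ (∀ l, t l ∈ Z0 F z) ∧
      (∀ k < z, y k = X * zet F z k) ∧
      ∑ k ∈ Finset.range (r + 1), C (q.coeff k) * y k = Q := by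
  let t0 : ℕ → F[X] := fun l => if l + 1 < z then zet F z l else 0
  have ht0 : ∀ l, t0 l ∈ Z0 F z := by
    intro l; simp only [t0]; split_ifs
    · exact zet_mem (by omega)
    · exact zero_mem _
  obtain ⟨t', h1, h2, h3⟩ := solve q hq r hr z hz (r - z) (by omega) (by omega)
    (Q - q * X ^ z - ∑ l ∈ Finset.range r, t0 l * divX^[l + 1] q) (by
      have hs : (∑ l ∈ Finset.range r, t0 l * divX^[l + 1] q).degree < (r + z - 1 : ℕ) := by
        rw [← mem_degreeLT]
        refine sum_mem fun l hl => ?_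
        rw [mem_degreeLT]
        simp only [t0]
        split_ifs with hlz
        · refine lt_of_le_of_lt degree_le_natDegree ?_
          have h1 : (zet F z l).natDegree = z - 1 - l + 2 * l := by
            rw [zet, ((monic_X_pow _).natDegree_mul (X2_monic l)), X2_deg, natDegree_X_pow]
          have h2 : (divX^[l + 1] q).natDegree ≤ r - 1 - l := by
            rw [natDegree_le_iff_coeff_eq_zero]
            intro i hi
            rw [coeff_divX_iter]
            exact coeff_eq_zero_of_natDegree_lt (by omega)
          have h3 := natDegree_mul_le (p := zet F z l) (q := divX^[l + 1] q)
          exact_mod_cast (by omega)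
        · rw [zero_mul, degree_zero]; exact WithBot.bot_lt_coe _
      have hm : degree (Q - q * X ^ z) < ((r + z - 1 : ℕ) : WithBot ℕ) := by
        rw [degree_lt_iff_coeff_zero]
        intro k hk
        rw [coeff_sub]
        obtain ⟨k', rfl⟩ : ∃ k', k = k' + z := ⟨k - z, by omega⟩
        rw [coeff_mul_X_pow]
        rcases (by omega : k' = r - 1 ∨ k' = r ∨ r < k') with h | h | h
        · rw [show k' + z = r + z - 1 by omega, hn, h, sub_self]
        · rw [h, ← hQd, hQ.coeff_natDegree, ← hr, hq.coeff_natDegree, sub_self]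
        · rw [coeff_eq_zero_of_natDegree_lt (by omega), coeff_eq_zero_of_natDegree_lt (by omega),
            sub_self]
      rw [show 2 * z + (r - z) - 1 = r + z - 1 by omega]
      exact lt_of_le_of_lt (degree_sub_le _ _) (max_lt hm hs))
  let t := t0 + t'
  let y : ℕ → F[X] := fun k => Nat.rec (X ^ z) (fun k yk => X * yk + t k) k
  have hy : ∀ k, y (k + 1) = X * y k + t k := fun k => rfl
  refine ⟨y, t, hy, fun l => add_mem (ht0 l) (h1 l), ?_, ?_⟩
  · intro k
    induction k with
    | zero =>
      intro _
      show X ^ z = _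
      rw [zet, pow_zero, mul_one, ← pow_succ']; congr 1; omega
    | succ k ih =>
      intro hk
      have : t k = zet F z k := by
        show t0 k + t' k = _
        rw [h2 k (by omega)]; simp [t0, hk]
      rw [hy, ih (by omega), this, zet, zet, show z - 1 - k = z - 1 - (k + 1) + 1 by omega]
      ring
  · rw [horner r q hr.le y t hy]
    have : y 0 = X ^ z := rfl
    rw [this]
    simp only [t, Pi.add_apply, add_mul, Finset.sum_add_distrib, h3]
    ring

theorem bord_mid (C' : Module.End F E) (q Q : F[X]) (hq : q.Monic) (r : ℕ) (hr : q.natDegree = r)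
    (b : Module.Basis (Fin r) F E) (v : E) (hb : ∀ k, b k = (C' ^ (k : ℕ)) v)
    (hqC : aeval C' q = 0) (z : ℕ) (hz : 0 < z)
    (hzr : z < r) (hQ : Q.Monic) (hQd : Q.natDegree = r + z)
    (hn : Q.coeff (r + z - 1) = q.coeff (r - 1)) (s : ℕ) (hs : 1 ≤ s) (hQs : Q ∣ X ^ s - 1) :
    Bord C' (Fin z → F) := by
  obtain ⟨y, t, hy, ht, hyz, hsum⟩ := exists_seq q Q hq r hr z hz hzr hQ hQd hn
  let μ : F[X] →ₗ[F] AdjoinRoot Q := (Ideal.Quotient.mkₐ F (Ideal.span {Q})).toLinearMap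
  have hμ : ∀ p, μ p = AdjoinRoot.mk Q p := fun p => rfl
  let T : Module.End F (AdjoinRoot Q) := LinearMap.mulLeft F (AdjoinRoot.root Q)
  have hTμ : ∀ p, T (μ p) = μ (X * p) := by
    intro p; simp [T, hμ]
  have hTs : T ^ s = 1 := by
    simp only [T, LinearMap.pow_mulLeft]
    have : AdjoinRoot.root Q ^ s = 1 := by
      have h := AdjoinRoot.mk_eq_zero.mpr hQs
      simpa [sub_eq_zero] using h
    rw [this]; exact LinearMap.mulLeft_one _ _
  let i : E →ₗ[F] AdjoinRoot Q := b.constr F (fun k => μ (y k))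
  have hi : ∀ k, i (b k) = μ (y k) := fun k => by simp only [i, Module.Basis.constr_basis]
  let j : (Fin z → F) →ₗ[F] AdjoinRoot Q :=
    μ ∘ₗ Fintype.linearCombination F (fun i : Fin z => zet F z i)
  have hjr : LinearMap.range j = (Z0 F z).map μ := by
    rw [LinearMap.range_comp]; rfl
  have hXZ : ∀ a ∈ Z0 F z, μ (X * a) ∈ LinearMap.range i := by
    have := Z0_induction ((LinearMap.range i).comap (μ ∘ₗ LinearMap.mulLeft F (X : F[X]))) (z := z) (by
      intro k hk
      simp only [Submodule.mem_comap, LinearMap.comp_apply, LinearMap.mulLeft_apply]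
      rw [← hyz k hk]
      exact ⟨b ⟨k, by omega⟩, hi _⟩)
    exact this
  have hymonic : ∀ k, (y (k + (z - 1))).Monic ∧ (y (k + (z - 1))).natDegree = k + (z - 1) + z := by
    intro k
    induction k with
    | zero =>
      rw [zero_add, hyz _ (by omega), zet, show z - 1 - (z - 1) = 0 by omega, pow_zero, one_mul]
      refine ⟨monic_X.mul (X2_monic _), ?_⟩
      rw [monic_X.natDegree_mul (X2_monic _), X2_deg, natDegree_X]; omega
    | succ k ih =>
      have hd : (t (k + (z - 1))).degree < (X * y (k + (z - 1))).degree := by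
        rw [degree_eq_natDegree (monic_X.mul ih.1).ne_zero, monic_X.natDegree_mul ih.1,
          natDegree_X, ih.2]
        refine lt_of_lt_of_le (Z0_degree hz (ht _)) ?_
        exact_mod_cast (by omega)
      rw [show k + 1 + (z - 1) = k + (z - 1) + 1 by omega, hy]
      refine ⟨(monic_X.mul ih.1).add_of_left hd, ?_⟩
      rw [natDegree_add_eq_left_of_degree_lt hd, monic_X.natDegree_mul ih.1, natDegree_X, ih.2]
      omega
  have hR1 : LinearMap.range i ≤ LinearMap.range (i.coprod j) := by
    rw [LinearMap.range_coprod]; exact le_sup_left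
  have hR2 : LinearMap.range j ≤ LinearMap.range (i.coprod j) := by
    rw [LinearMap.range_coprod]; exact le_sup_right
  have hspan : ∀ d, 2 * z + d ≤ r + z → ∀ p : F[X], p.degree < (2 * z + d : ℕ) →
      μ p ∈ LinearMap.range (i.coprod j) := by
    intro d
    induction d with
    | zero =>
      intro _ p hp
      obtain ⟨a, ha, c, hc, rfl⟩ := Z0_span z p (by simpa using hp)
      rw [map_add]
      refine add_mem (hR2 ?_) (hR1 (hXZ c hc))
      rw [hjr]; exact ⟨a, ha, rfl⟩
    | succ d ih =>
      intro hd p hp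
      obtain ⟨hm, hmd⟩ := hymonic (d + 1)
      rw [show d + 1 + (z - 1) = d + z by omega] at hm hmd
      have hmem : μ (y (d + z)) ∈ LinearMap.range (i.coprod j) :=
        hR1 ⟨b ⟨d + z, by omega⟩, hi _⟩
      have h1 := ih (by omega) (p - p.coeff (2 * z + d) • y (d + z)) (by
        rw [degree_lt_iff_coeff_zero] at hp ⊢
        intro k hk
        rw [coeff_sub, coeff_smul, smul_eq_mul]
        rcases Nat.eq_or_lt_of_le hk with h' | h'
        · have : (y (d + z)).coeff k = 1 := by
            rw [show k = (y (d + z)).natDegree by omega]; exact hm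
          rw [this, ← h']; simp
        · rw [hp k (by omega), coeff_eq_zero_of_natDegree_lt (show (y (d + z)).natDegree < k by omega)]; simp)
      rw [map_sub, map_smul] at h1
      have := add_mem h1 (Submodule.smul_mem _ (p.coeff (2 * z + d)) hmem)
      simpa using this
  have hsurj : Function.Surjective (i.coprod j) := by
    rw [← LinearMap.range_eq_top, eq_top_iff]
    intro x _
    obtain ⟨p, rfl⟩ := AdjoinRoot.mk_surjective x
    have h1 : AdjoinRoot.mk Q p = μ (p %ₘ Q) := by
      rw [hμ, AdjoinRoot.mk_eq_mk, modByMonic_eq_sub_mul_div]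
      simp
    rw [h1]
    refine hspan (r - z) (by omega) _ ?_
    refine lt_of_lt_of_le (degree_modByMonic_lt p hQ) ?_
    rw [degree_eq_natDegree hQ.ne_zero, hQd]
    exact_mod_cast (by omega)
  have hfE : Module.Finite F E := Module.Finite.of_basis b
  have hfV : Module.Finite F (AdjoinRoot Q) := Polynomial.Monic.finite_adjoinRoot hQ
  have hfin : Module.finrank F (E × (Fin z → F)) = Module.finrank F (AdjoinRoot Q) := by
    rw [Module.finrank_prod, Module.finrank_eq_card_basis b, (AdjoinRoot.powerBasis' hQ).finrank]
    simp [hQd]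
  have hbij : Function.Bijective (i.coprod j) :=
    ⟨(LinearMap.injective_iff_surjective_of_finrank_eq_finrank hfin).mpr hsurj, hsurj⟩
  refine bord_of_model C' T s hs hTs i j hbij ?_ ?_
  · have hzero : (LinearMap.range j).mkQ ∘ₗ (T ∘ₗ i - i ∘ₗ C') = 0 := by
      refine b.ext fun k => ?_
      simp only [LinearMap.comp_apply, LinearMap.sub_apply, LinearMap.zero_apply,
        Submodule.mkQ_apply, Submodule.Quotient.mk_eq_zero]
      rw [hi, hTμ, hjr]
      by_cases hk : (k : ℕ) + 1 < r
      · have : C' (b k) = b ⟨k + 1, hk⟩ := by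
          rw [hb, hb]; simp only [pow_succ' C', Module.End.mul_apply]
        rw [this, hi, ← map_sub]
        refine ⟨_, neg_mem (ht k), ?_⟩
        congr 1
        simp only [hy]; ring
      · have hk' : (k : ℕ) + 1 = r := by omega
        have h0 : ∑ l : Fin r, q.coeff l • b l + C' (b k) = 0 := by
          have h := congrArg (fun f : Module.End F E => f v) hqC
          simp only [aeval_eq_sum_range, hr, LinearMap.zero_apply, LinearMap.sum_apply,
            LinearMap.smul_apply] at h
          rw [Finset.sum_range_succ, Finset.sum_range] at h
          have hc : q.coeff r = 1 := by rw [← hr]; exact hq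
          rw [hc, one_smul] at h
          rw [hb k, ← Module.End.mul_apply, ← pow_succ', hk', ← h]
          simp only [hb]
        have h1 : i (C' (b k)) = - ∑ l : Fin r, q.coeff l • μ (y l) := by
          rw [eq_neg_of_add_eq_zero_right h0, map_neg, map_sum]
          simp only [map_smul, hi]
        have h2 : μ (X * y k) + ∑ l : Fin r, q.coeff l • μ (y l) = - μ (t k) := by
          have h3 : μ (∑ k ∈ Finset.range (r + 1), C (q.coeff k) * y k) = 0 := by
            rw [hsum, hμ, AdjoinRoot.mk_self]
          rw [Finset.sum_range_succ, Finset.sum_range] at h3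
          have hc : q.coeff r = 1 := by rw [← hr]; exact hq
          have hyr := hy (k : ℕ)
          rw [hk'] at hyr
          rw [hc, hyr, map_add, map_sum, map_one, one_mul, map_add] at h3
          simp only [← smul_eq_C_mul, map_smul] at h3
          rw [eq_neg_iff_add_eq_zero, ← h3]
          abel
        rw [h1, sub_neg_eq_add, h2, ← map_neg]
        exact ⟨_, neg_mem (ht k), rfl⟩
    intro e
    have := LinearMap.congr_fun hzero e
    simp only [LinearMap.comp_apply, LinearMap.sub_apply, LinearMap.zero_apply,
        Submodule.mkQ_apply, Submodule.Quotient.mk_eq_zero] at this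
    obtain ⟨f, hf⟩ := this
    exact ⟨f, by rw [hf]; abel⟩
  · intro f
    obtain ⟨e, he⟩ := hXZ (Fintype.linearCombination F (fun i : Fin z => zet F z i) f) ⟨f, rfl⟩
    exact ⟨e, by rw [he]; exact hTμ _⟩


/-- Zero or a root of unity. -/
def GoodTr (c : F) : Prop := c = 0 ∨ ∃ s : ℕ, 1 ≤ s ∧ c ^ s = 1

theorem exists_Q (c : F) (hc : GoodTr c) (m : ℕ) (hm : 2 ≤ m) :
    ∃ Q : F[X], Q.Monic ∧ Q.natDegree = m + 1 ∧ Q.coeff m = c ∧ ∃ s : ℕ, 1 ≤ s ∧ Q ∣ X ^ s - 1 := by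
  rcases hc with rfl | ⟨s, hs, hcs⟩
  · refine ⟨X ^ (m + 1) - 1, monic_X_pow_sub_C 1 (by omega), natDegree_X_pow_sub_C, ?_, m + 1,
      by omega, dvd_rfl⟩
    rw [coeff_sub, coeff_X_pow, coeff_one, if_neg (by omega), if_neg (by omega), sub_zero]
  · obtain ⟨τ, rfl⟩ : ∃ τ : F, c = -τ := ⟨-c, by simp⟩
    have hτ : τ ^ (2 * s) = 1 := by
      have : (-τ) ^ (2 * s) = 1 := by rw [mul_comm, pow_mul, hcs, one_pow]
      rwa [Even.neg_pow (even_two_mul s)] at this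
    have hτ0 : τ ≠ 0 := by
      rintro rfl
      rw [zero_pow (by omega)] at hτ
      exact zero_ne_one hτ
    have hP : (X ^ m + C (τ ^ m) : F[X]).Monic := monic_X_pow_add_C _ (by omega)
    have hPd : (X ^ m + C (τ ^ m) : F[X]).natDegree = m := natDegree_X_pow_add_C
    set N := 2 * m * (2 * s) with hN
    have hN1 : 1 ≤ N := Nat.one_le_iff_ne_zero.mpr (by simp [hN]; omega)
    have d1 : (X - C τ : F[X]) ∣ X ^ N - 1 := by
      have : (X ^ N - 1 : F[X]) = X ^ N - (C τ) ^ N := by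
        rw [← C_pow, hN, mul_comm (2 * m), pow_mul τ, hτ, one_pow, C_1]
      rw [this]; exact sub_dvd_pow_sub_pow _ _ _
    have d2 : (X ^ m + C (τ ^ m) : F[X]) ∣ X ^ N - 1 := by
      have h1 : (X ^ N - 1 : F[X]) = (X ^ (2 * m)) ^ (2 * s) - (C (τ ^ (2 * m))) ^ (2 * s) := by
        rw [← C_pow, ← pow_mul, ← pow_mul, mul_comm (2 * m) (2 * s), pow_mul τ, hτ, one_pow, C_1, hN,
          mul_comm (2 * m)]
      rw [h1]
      refine Dvd.dvd.trans ?_ (sub_dvd_pow_sub_pow _ _ _)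
      refine ⟨X ^ m - C (τ ^ m), ?_⟩
      rw [mul_comm 2 m, pow_mul, pow_mul τ, C_pow]; ring
    refine ⟨(X - C τ) * (X ^ m + C (τ ^ m)), (monic_X_sub_C τ).mul hP, ?_, ?_, 2 * N, by omega, ?_⟩
    · rw [(monic_X_sub_C τ).natDegree_mul hP, hPd, natDegree_X_sub_C]; omega
    · obtain ⟨m, rfl⟩ : ∃ k, m = k + 1 := ⟨m - 1, by omega⟩
      rw [sub_mul, coeff_sub, coeff_X_mul, coeff_C_mul]
      simp only [coeff_add, coeff_X_pow, coeff_C]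
      rw [if_neg (by omega), if_neg (by omega), if_pos trivial, if_neg (by omega)]; ring
    · have hfac : (X ^ (2 * N) - 1 : F[X]) = (X ^ N - 1) * (X ^ N + 1) := by
        rw [mul_comm 2 N, pow_mul]; ring
      by_cases h2 : (2 : F) = 0
      · have h2' : (2 : F[X]) = 0 := by
          rw [← map_ofNat (C : F →+* F[X]) 2, h2, C_0]
        have : (X ^ (2 * N) - 1 : F[X]) = (X ^ N - 1) * (X ^ N - 1) := by
          rw [hfac]; linear_combination (X ^ N - 1) * h2'
        rw [this]
        exact mul_dvd_mul d1 d2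
      · refine dvd_trans (IsCoprime.mul_dvd ?_ d1 d2) ⟨_, hfac⟩
        refine (Irreducible.coprime_iff_not_dvd (irreducible_X_sub_C τ)).mpr ?_
        rw [dvd_iff_isRoot]
        simp only [IsRoot, eval_add, eval_pow, eval_X, eval_C]
        rw [← two_mul]
        exact mul_ne_zero h2 (pow_ne_zero _ hτ0)

theorem bord_block (C' : Module.End F E) (q : F[X]) (hq : q.Monic) (r : ℕ) (hr : q.natDegree = r)
    (b : Module.Basis (Fin r) F E) (v : E) (hb : ∀ k, b k = (C' ^ (k : ℕ)) v)
    (hqC : aeval C' q = 0) (hcase : (∃ d : ℕ, 1 ≤ d ∧ C' ^ d = 1) ∨ C' ^ r = 0)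
    (htr : 2 ≤ r → GoodTr (q.coeff (r - 1)))
    (z : ℕ) (hzr : z ≤ r) (hker : z = 0 → ∃ d : ℕ, 1 ≤ d ∧ C' ^ d = 1) :
    Bord C' (Fin z → F) := by
  rcases Nat.eq_zero_or_pos z with rfl | hz
  · obtain ⟨d, hd, h⟩ := hker rfl
    exact bord_zero C' d hd h
  rcases Nat.lt_or_eq_of_le hzr with h | rfl
  · obtain ⟨Q, h1, h2, h3, s, hs, h4⟩ := exists_Q _ (htr (by omega)) (r + z - 1) (by omega)
    exact bord_mid C' q Q hq r hr b v hb hqC z hz h h1 (by omega) h3 s hs h4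
  · have : Bord C' E := by
      rcases hcase with ⟨d, hd, h⟩ | h
      · exact bord_self C' d hd h
      · by_cases h2 : (2 : F) = 0
        · exact bord_nil_two h2 C' _ h
        · exact bord_nil h2 C' z hz b v hb h
    exact this.transport (LinearEquiv.refl F E) (fun x => rfl) b.equivFun.symm

theorem nextCoeff_expand_zero {R : Type*} [CommRing R] (p : ℕ) (hp : 2 ≤ p) (f : R[X]) :
    (expand R p f).nextCoeff = 0 := by
  rw [nextCoeff_eq_zero]
  by_cases h : (expand R p f).natDegree = 0
  · exact Or.inl h
  · refine Or.inr ⟨Nat.pos_of_ne_zero h, ?_⟩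
    rw [coeff_expand (by omega), if_neg]
    rw [natDegree_expand] at h ⊢
    rintro ⟨k, hk⟩
    have h1 : f.natDegree * p = p * k + 1 := by omega
    have h2 : p ∣ p * k + 1 := ⟨f.natDegree, by rw [← h1, mul_comm]⟩
    have h3 : p ∣ 1 := (Nat.dvd_add_right (Dvd.intro k rfl)).mp h2
    have := Nat.le_of_dvd one_pos h3
    omega

theorem nextCoeff_cyclotomic (n : ℕ) (hn : 0 < n) :
    (cyclotomic n ℚ).nextCoeff = 0 ∨ (cyclotomic n ℚ).nextCoeff = 1 ∨
      (cyclotomic n ℚ).nextCoeff = -1 := by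
  induction n using Nat.strong_induction_on with
  | _ n ih =>
    rcases Nat.lt_or_eq_of_le (Nat.succ_le_of_lt hn) with h | h
    · have hp : n.minFac.Prime := Nat.minFac_prime (by omega)
      obtain ⟨m, hm⟩ := Nat.minFac_dvd n
      set p := n.minFac
      have hm0 : 0 < m := Nat.pos_of_ne_zero (by rintro rfl; omega)
      have hmn : m < n := by
        rw [hm]; exact lt_mul_of_one_lt_left hm0 hp.one_lt
      rw [hm, mul_comm]
      by_cases hd : p ∣ m
      · rw [← cyclotomic_expand_eq_cyclotomic hp hd]
        exact Or.inl (nextCoeff_expand_zero p hp.two_le _)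
      · have h1 := congrArg nextCoeff (cyclotomic_expand_eq_cyclotomic_mul hp hd ℚ)
        rw [nextCoeff_expand_zero p hp.two_le, (cyclotomic.monic _ _).nextCoeff_mul
          (cyclotomic.monic _ _)] at h1
        rcases ih m hmn hm0 with h2 | h2 | h2 <;> rw [h2] at h1
        · left; linarith
        · right; right; linarith
        · right; left; linarith
    · have : n = 1 := by omega
      subst this
      right; right
      rw [cyclotomic_one]
      simpa using nextCoeff_X_sub_C (1 : ℚ)

theorem irred_of_charZero [CharZero F] (q p : F[X]) (e d : ℕ) (hp : Irreducible p)
    (hqp : Associated q (p ^ e)) (hd : 1 ≤ d) (hqd : q ∣ X ^ d - 1) (hdeg : 0 < q.natDegree) :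
    Irreducible q := by
  have hsep : (X ^ d - 1 : F[X]).Separable :=
    X_pow_sub_one_separable_iff.mpr (by exact_mod_cast (by omega : d ≠ 0))
  have hsq : Squarefree q := hsep.squarefree.squarefree_of_dvd hqd
  have he : e = 1 := by
    rcases e with _ | _ | e
    · rw [pow_zero] at hqp
      have := natDegree_eq_zero_of_isUnit (associated_one_iff_isUnit.mp hqp)
      omega
    · rfl
    · exfalso
      have : p * p ∣ q := hqp.symm.dvd_iff_dvd_right.mp ⟨p ^ e, by ring⟩
      exact hp.not_isUnit (hsq p this)
  rw [he, pow_one] at hqp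
  exact hqp.symm.irreducible hp

theorem goodTr_rat (φ : F ≃+* ℚ) (q p : F[X]) (hq : q.Monic) (e d : ℕ) (hp : Irreducible p)
    (hqp : Associated q (p ^ e)) (hd : 1 ≤ d) (hqd : q ∣ X ^ d - 1) (hdeg : 2 ≤ q.natDegree) :
    GoodTr q.nextCoeff := by
  have : CharZero F := RingHom.charZero φ.toRingHom
  have hirr := irred_of_charZero q p e d hp hqp hd hqd (by omega)
  have hirr' : Irreducible (q.map (φ : F →+* ℚ)) := by
    have := (MulEquiv.irreducible_iff (mapEquiv φ)).mpr hirr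
    simpa using this
  have hdv : q.map (φ : F →+* ℚ) ∣ ∏ i ∈ d.divisors, cyclotomic i ℚ := by
    rw [prod_cyclotomic_eq_X_pow_sub_one (by omega)]
    have := Polynomial.map_dvd (φ : F →+* ℚ) hqd
    simpa using this
  obtain ⟨i, hi, hdi⟩ := hirr'.prime.exists_mem_finset_dvd hdv
  have hi0 : 0 < i := Nat.pos_of_mem_divisors hi
  have heq := eq_of_monic_of_associated (hq.map _) (cyclotomic.monic i ℚ)
    (hirr'.associated_of_dvd (cyclotomic.irreducible_rat hi0) hdi)
  have hnc : φ q.nextCoeff = (cyclotomic i ℚ).nextCoeff := by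
    rw [← heq, nextCoeff_map (f := (φ : F →+* ℚ)) φ.injective]; rfl
  rcases nextCoeff_cyclotomic i hi0 with h | h | h <;> rw [h] at hnc
  · left; exact φ.injective (by rw [hnc, map_zero])
  · right; exact ⟨1, le_rfl, φ.injective (by rw [pow_one, hnc, map_one])⟩
  · right; exact ⟨2, by norm_num, φ.injective (by rw [map_pow, hnc, map_one]; norm_num)⟩

theorem goodTr_charP (p : ℕ) (hp : p.Prime) [CharP F p] (q : F[X]) (hq : q.Monic) (d : ℕ)
    (hd : 1 ≤ d) (hqd : q ∣ X ^ d - 1) (k : ℕ) : GoodTr (q.coeff k) := by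
  have : Fact p.Prime := ⟨hp⟩
  let _ : Algebra (ZMod p) F := ZMod.algebra F p
  have hm : (X ^ d - 1 : (ZMod p)[X]).Monic := monic_X_pow_sub_C 1 (by omega)
  have hl := integralClosure.mem_lifts_of_monic_of_dvd_map F hm hq (by simpa using hqd)
  rw [lifts_iff_coeff_lifts] at hl
  obtain ⟨τ, hτ⟩ := hl k
  have hintg : IsIntegral (ZMod p) (q.coeff k) := by rw [← hτ]; exact τ.2
  set c := q.coeff k
  have hfg := hintg.fg_adjoin_singleton
  have : Module.Finite (ZMod p) (Algebra.adjoin (ZMod p) {c}) := Module.Finite.iff_fg.mpr hfg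
  have hfin : Finite (Algebra.adjoin (ZMod p) {c}) := Module.finite_of_finite (ZMod p)
  by_cases hc : c = 0
  · exact Or.inl hc
  right
  obtain ⟨a, b, hab, h⟩ := Finite.exists_ne_map_eq_of_infinite
    (fun n : ℕ => (⟨c, Algebra.self_mem_adjoin_singleton _ c⟩ : Algebra.adjoin (ZMod p) {c}) ^ n)
  have h' : c ^ a = c ^ b := by simpa using congrArg Subtype.val h
  wlog hlt : a < b generalizing a b
  · exact this b a hab.symm h.symm h'.symm (by omega)
  refine ⟨b - a, by omega, ?_⟩
  have : c ^ b = c ^ a * c ^ (b - a) := by rw [← pow_add]; congr 1; omega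
  rw [this] at h'
  exact (mul_left_cancel₀ (pow_ne_zero a hc) (by rw [mul_one]; exact h')).symm

theorem goodTr (hF : Nonempty (F ≃+* ℚ) ∨ (IsAlgClosed F ∧ CharZero F) ∨
      (∃ p : ℕ, p.Prime ∧ CharP F p)) (q p : F[X]) (hq : q.Monic) (e d : ℕ) (hp : Irreducible p)
    (hqp : Associated q (p ^ e)) (hd : 1 ≤ d) (hqd : q ∣ X ^ d - 1) (hdeg : 2 ≤ q.natDegree) :
    GoodTr (q.coeff (q.natDegree - 1)) := by
  rcases hF with ⟨⟨φ⟩⟩ | ⟨_, _⟩ | ⟨p, hp, _⟩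
  · rw [← nextCoeff_of_natDegree_pos (by omega)]
    exact goodTr_rat φ q p hq e d hp hqp hd hqd hdeg
  · have hirr := irred_of_charZero q p e d hp hqp hd hqd (by omega)
    have : q.natDegree = 1 := natDegree_eq_of_degree_eq_some (IsAlgClosed.degree_eq_one_of_irreducible F hirr)
    omega
  · exact goodTr_charP p hp q hq d hd hqd _

theorem exists_mid {ι : Type*} [Fintype ι] (a b : ι → ℕ) (hab : ∀ i, a i ≤ b i) (z : ℕ)
    (h1 : ∑ i, a i ≤ z) (h2 : z ≤ ∑ i, b i) :
    ∃ c : ι → ℕ, (∀ i, a i ≤ c i) ∧ (∀ i, c i ≤ b i) ∧ ∑ i, c i = z := by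
  classical
  induction z, h1 using Nat.le_induction with
  | base => exact ⟨a, fun _ => le_rfl, hab, rfl⟩
  | succ z hz ih =>
    obtain ⟨c, hc1, hc2, hc3⟩ := ih (by omega)
    obtain ⟨i, _, hi⟩ := Finset.exists_lt_of_sum_lt (s := Finset.univ) (f := c) (g := b) (by omega)
    refine ⟨c + Pi.single i 1, fun k => (hc1 k).trans (by simp), fun k => ?_, ?_⟩
    · by_cases h : k = i
      · subst h; simpa using hi
      · simpa [Pi.single_eq_of_ne h] using hc2 k
    · simp [Finset.sum_add_distrib, hc3]

/-- Multiplication by the root. -/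
noncomputable def mulRoot (q : F[X]) : Module.End F (AdjoinRoot q) :=
  LinearMap.mulLeft F (AdjoinRoot.root q)

theorem mulRoot_pow (q : F[X]) (k : ℕ) :
    mulRoot q ^ k = LinearMap.mulLeft F (AdjoinRoot.root q ^ k) := LinearMap.pow_mulLeft _ _ _ _

theorem mulRoot_pow_apply (q : F[X]) (k : ℕ) (x : AdjoinRoot q) :
    (mulRoot q ^ k) x = AdjoinRoot.root q ^ k * x := by rw [mulRoot_pow]; rfl

theorem bord_adjoinRoot (hF : Nonempty (F ≃+* ℚ) ∨ (IsAlgClosed F ∧ CharZero F) ∨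
      (∃ p : ℕ, p.Prime ∧ CharP F p)) (q p : F[X]) (hq : q.Monic) (e : ℕ) (hp : Irreducible p)
    (hqp : Associated q (p ^ e)) (m k : ℕ) (hkm : k < m) (hqd : q ∣ X ^ m - X ^ k)
    (z : ℕ) (hz1 : Module.finrank F (LinearMap.ker (mulRoot q)) ≤ z) (hz2 : z ≤ q.natDegree) :
    Bord (mulRoot q) (Fin z → F) := by
  have hfin : Module.Finite F (AdjoinRoot q) := hq.finite_adjoinRoot
  have hmk : mulRoot q ^ m = mulRoot q ^ k := by
    have h := AdjoinRoot.mk_eq_zero.mpr hqd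
    simp only [map_sub, map_pow, AdjoinRoot.mk_X, sub_eq_zero] at h
    rw [mulRoot_pow, mulRoot_pow, h]
  have hker : z = 0 → ∃ d : ℕ, 1 ≤ d ∧ mulRoot q ^ d = 1 := by
    rintro rfl
    have hk : LinearMap.ker (mulRoot q) = ⊥ := Submodule.finrank_eq_zero.mp (by omega)
    have hinj : Function.Injective (mulRoot q) := LinearMap.ker_eq_bot.mp hk
    refine ⟨m - k, by omega, LinearMap.ext fun x => ?_⟩
    have hinj' : Function.Injective ((mulRoot q) ^ k) := by
      rw [Module.End.coe_pow]; exact hinj.iterate k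
    apply hinj'
    rw [← Module.End.mul_apply, ← pow_add, show k + (m - k) = m by omega, hmk]; rfl
  have hX : (∃ d : ℕ, 1 ≤ d ∧ q ∣ X ^ d - 1) ∨ q = X ^ q.natDegree := by
    by_cases hpX : p ∣ X
    · right
      have h1 : Associated p X := hp.associated_of_dvd irreducible_X hpX
      have h2 : q = X ^ e := eq_of_monic_of_associated hq (monic_X_pow e)
        (hqp.trans (h1.pow_pow (n := e)))
      rw [h2, natDegree_X_pow]
    · left
      have h1 : IsCoprime p X := (Irreducible.coprime_iff_not_dvd hp).mpr hpX
      have h2 : IsCoprime q (X ^ k) := by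
        have := (h1.pow_left (m := e)).pow_right (n := k)
        exact this.of_isCoprime_of_dvd_left hqp.dvd
      refine ⟨m - k, by omega, h2.dvd_of_dvd_mul_left ?_⟩
      rw [mul_sub, ← pow_add, mul_one, show k + (m - k) = m by omega]
      exact hqd
  refine bord_block (mulRoot q) q hq q.natDegree rfl (AdjoinRoot.powerBasis' hq).basis 1 ?_ ?_ ?_ ?_
    z hz2 hker
  · intro k
    rw [mulRoot_pow_apply, mul_one]
    exact (AdjoinRoot.powerBasis' hq).basis_eq_pow k
  · have h1 : mulRoot q = Algebra.lmul F (AdjoinRoot q) (AdjoinRoot.root q) := rfl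
    rw [h1, aeval_algHom_apply, AdjoinRoot.aeval_eq, AdjoinRoot.mk_self, map_zero]
  · rcases hX with ⟨d, hd, h⟩ | h
    · left
      refine ⟨d, hd, ?_⟩
      have h := AdjoinRoot.mk_eq_zero.mpr h
      simp only [map_sub, map_pow, AdjoinRoot.mk_X, sub_eq_zero, map_one] at h
      rw [mulRoot_pow, h]; exact LinearMap.mulLeft_one _ _
    · right
      have h' := AdjoinRoot.mk_eq_zero.mpr (dvd_of_eq h)
      simp only [map_pow, AdjoinRoot.mk_X] at h'
      rw [mulRoot_pow, h']; exact LinearMap.mulLeft_zero_eq_zero _ _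
  · intro h2
    rcases hX with ⟨d, hd, h⟩ | h
    · exact goodTr hF q p hq e d hp hqp hd h h2
    · left
      conv_lhs => enter [1]; rw [h]
      rw [coeff_X_pow, if_neg (by omega)]

theorem exists_decomp.{u, v} {F : Type u} [Field F] {E : Type v} [AddCommGroup E] [Module F E]
    (C' : Module.End F E) [Module.Finite F E] :
    ∃ (ι : Type u) (_ : Fintype ι) (q p : ι → F[X]) (e : ι → ℕ),
      (∀ i, (q i).Monic) ∧ (∀ i, Irreducible (p i)) ∧ (∀ i, Associated (q i) (p i ^ e i)) ∧
      ∃ Ψ : E ≃ₗ[F] (∀ i, AdjoinRoot (q i)), ∀ x i, Ψ (C' x) i = mulRoot (q i) (Ψ x i) := by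
  classical
  obtain ⟨ι, _, p, hp, e, ⟨L⟩⟩ := Module.equiv_directSum_of_isTorsion (R := F[X])
    (M := Module.AEval' C') (Module.AEval.isTorsion_of_finiteDimensional F E C')
  have hp0 : ∀ i, p i ^ e i ≠ 0 := fun i => pow_ne_zero _ (hp i).ne_zero
  let q : ι → F[X] := fun i => normalize (p i ^ e i)
  have hqa : ∀ i, Associated (q i) (p i ^ e i) := fun i => normalize_associated _
  have hspan : ∀ i, Submodule.span F[X] {p i ^ e i} = Ideal.span {q i} := fun i =>
    (Ideal.span_singleton_eq_span_singleton.mpr (hqa i).symm)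
  let g0 : ∀ i, (F[X] ⧸ Submodule.span F[X] {p i ^ e i}) ≃ₗ[F[X]] (F[X] ⧸ Ideal.span {q i}) :=
    fun i => Submodule.quotEquivOfEq _ _ (hspan i)
  let g1 : ∀ i, (F[X] ⧸ Ideal.span {q i}) ≃ₗ[F] AdjoinRoot (q i) := fun i =>
    { toFun := fun x => x
      invFun := fun x => x
      map_add' := fun x y => rfl
      map_smul' := fun c x => by
        induction x using Submodule.Quotient.induction_on
        rfl
      left_inv := fun x => rfl
      right_inv := fun x => rfl }
  have hg1 : ∀ i x, g1 i ((X : F[X]) • x) = mulRoot (q i) (g1 i x) := by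
    intro i x
    induction x using Submodule.Quotient.induction_on
    rfl
  let L1 := (L.trans (DirectSum.linearEquivFunOnFintype F[X] ι
    (fun i => F[X] ⧸ Submodule.span F[X] {p i ^ e i}))).trans (LinearEquiv.piCongrRight g0)
  let L2 : E ≃ₗ[F] (∀ i, F[X] ⧸ Ideal.span {q i}) :=
    (Module.AEval'.of C').trans (L1.restrictScalars F)
  have hL2 : ∀ x, L2 (C' x) = (X : F[X]) • L2 x := by
    intro x
    show L1 (Module.AEval'.of C' (C' x)) = (X : F[X]) • L1 (Module.AEval'.of C' x)
    rw [← Module.AEval'.X_smul_of, map_smul]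
  refine ⟨ι, inferInstance, q, p, e, fun i => monic_normalize (hp0 i), hp, hqa,
    L2.trans (LinearEquiv.piCongrRight g1), ?_⟩
  intro x i
  show g1 i (L2 (C' x) i) = mulRoot (q i) (g1 i (L2 x i))
  rw [hL2, ← hg1]; rfl

theorem bord_main (hF : Nonempty (F ≃+* ℚ) ∨ (IsAlgClosed F ∧ CharZero F) ∨
      (∃ p : ℕ, p.Prime ∧ CharP F p)) [Module.Finite F E] [Module.Finite F Z]
    (C' : Module.End F E) (m k : ℕ) (hkm : k < m) (hC : C' ^ m = C' ^ k)
    (h1 : Module.finrank F (LinearMap.ker C') ≤ Module.finrank F Z)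
    (h2 : Module.finrank F Z ≤ Module.finrank F E) : Bord C' Z := by
  classical
  obtain ⟨ι, _, q, p, e, hq, hp, hqp, Ψ, hΨ⟩ := exists_decomp C'
  have hfin : ∀ i, Module.Finite F (AdjoinRoot (q i)) := fun i => (hq i).finite_adjoinRoot
  have hqd : ∀ i, q i ∣ X ^ m - X ^ k := by
    intro i
    rw [← AdjoinRoot.mk_eq_zero]
    have h : ∀ n x, Ψ ((C' ^ n) x) i = (mulRoot (q i) ^ n) (Ψ x i) := fun n x =>
      pow_intertwine C' (mulRoot (q i)) (LinearMap.proj i ∘ₗ Ψ.toLinearMap) (fun x => hΨ x i) n x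
    have h3 := h m (Ψ.symm (Pi.single i 1))
    rw [hC, h k, mulRoot_pow_apply, mulRoot_pow_apply] at h3
    simp only [LinearEquiv.apply_symm_apply, Pi.single_eq_same, mul_one] at h3
    simp [h3]
  have hker : ∑ i, Module.finrank F (LinearMap.ker (mulRoot (q i))) ≤
      Module.finrank F (LinearMap.ker C') := by
    rw [← Module.finrank_pi_fintype]
    let f : (∀ i, LinearMap.ker (mulRoot (q i))) →ₗ[F] E :=
      Ψ.symm.toLinearMap ∘ₗ LinearMap.pi fun i => (Submodule.subtype _) ∘ₗ LinearMap.proj i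
    have hf : ∀ y, f y ∈ LinearMap.ker C' := by
      intro y
      rw [LinearMap.mem_ker]
      apply Ψ.injective
      ext i
      rw [hΨ, map_zero]
      show mulRoot (q i) (Ψ (Ψ.symm fun i => (y i : AdjoinRoot (q i))) i) = 0
      rw [LinearEquiv.apply_symm_apply]
      exact (y i).2
    refine LinearMap.finrank_le_finrank_of_injective (f := f.codRestrict _ hf) ?_
    intro y y' h
    have h : Ψ.symm (fun i => (y i : AdjoinRoot (q i))) = Ψ.symm (fun i => (y' i : AdjoinRoot (q i))) :=
      congrArg Subtype.val h
    have h := Ψ.symm.injective h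
    funext i
    exact Subtype.ext (congrFun h i)
  have hdeg : ∀ i, Module.finrank F (AdjoinRoot (q i)) = (q i).natDegree := fun i =>
    (AdjoinRoot.powerBasis' (hq i)).finrank
  have hE : Module.finrank F E = ∑ i, (q i).natDegree := by
    rw [Ψ.finrank_eq, Module.finrank_pi_fintype]
    exact Finset.sum_congr rfl fun i _ => hdeg i
  obtain ⟨c, hc1, hc2, hc3⟩ := exists_mid
    (fun i => Module.finrank F (LinearMap.ker (mulRoot (q i)))) (fun i => (q i).natDegree)
    (fun i => by rw [← hdeg]; exact Submodule.finrank_le _) (Module.finrank F Z)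
    (hker.trans h1) (by rw [← hE]; exact h2)
  have hB := bord_pi (fun i => mulRoot (q i)) (Z := fun i => Fin (c i) → F) (fun i =>
    bord_adjoinRoot hF (q i) (p i) (hq i) (e i) (hp i) (hqp i) m k hkm (hqd i) (c i) (hc1 i) (hc2 i))
  have hZ : Module.finrank F Z = Module.finrank F (∀ i, Fin (c i) → F) := by
    rw [Module.finrank_pi_fintype, ← hc3]; simp
  refine hB.transport Ψ (fun x => ?_) (LinearEquiv.ofFinrankEq _ _ hZ)
  ext i
  exact hΨ x i

theorem exists_ext [Module.Finite F V] [Module.Finite F Z] (R K : Submodule F V)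
    (φ : R →ₗ[F] Z) (hdim : Module.finrank F K = Module.finrank F Z)
    (hφ : ∀ x : R, (x : V) ∈ K → φ x = 0 → x = 0) :
    ∃ ψ : V →ₗ[F] Z, (∀ x : R, ψ x = φ x) ∧ ∀ x ∈ K, ψ x = 0 → x = 0 := by
  obtain ⟨W, hW⟩ := Submodule.exists_isCompl (R ⊓ K)
  let I : Submodule F R := K.comap R.subtype
  obtain ⟨S', hS'⟩ := Submodule.exists_isCompl (I.map φ)
  have hI : Module.finrank F I = Module.finrank F (R ⊓ K : Submodule F V) := by
    have : I.map R.subtype = R ⊓ K := Submodule.map_comap_subtype R K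
    rw [← this]
    exact (LinearEquiv.finrank_eq (Submodule.equivMapOfInjective _ R.subtype_injective I))
  have hIφ : Module.finrank F (I.map φ) = Module.finrank F I := by
    have hinj : Function.Injective (φ ∘ₗ I.subtype) := by
      rw [← LinearMap.ker_eq_bot, LinearMap.ker_eq_bot']
      intro x hx
      exact Subtype.ext (hφ x x.2 hx)
    have h := LinearMap.finrank_range_of_inj hinj
    rwa [LinearMap.range_comp, Submodule.range_subtype] at h
  have h1 := Submodule.finrank_add_eq_of_isCompl hS'
  have hsup : (R ⊓ K) ⊔ (W ⊓ K) = K := by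
    apply le_antisymm (sup_le inf_le_right inf_le_right)
    intro x hx
    have : x ∈ (R ⊓ K) ⊔ W := by rw [hW.sup_eq_top]; trivial
    obtain ⟨a, ha, w, hw, rfl⟩ := Submodule.mem_sup.mp this
    refine Submodule.mem_sup.mpr ⟨a, ha, w, ⟨hw, ?_⟩, rfl⟩
    have := K.sub_mem hx ha.2
    simpa using this
  have hinf : (R ⊓ K) ⊓ (W ⊓ K) = ⊥ := by
    rw [eq_bot_iff, ← hW.inf_eq_bot]
    exact inf_le_inf_left _ inf_le_left
  have h2 := Submodule.finrank_sup_add_finrank_inf_eq (R ⊓ K) (W ⊓ K)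
  rw [hsup, hinf, finrank_bot] at h2
  have hκ : Module.finrank F (W ⊓ K : Submodule F V) = Module.finrank F S' := by omega
  let κ := LinearEquiv.ofFinrankEq _ _ hκ
  let h : (R × (W ⊓ K : Submodule F V)) →ₗ[F] V := R.subtype.coprod (Submodule.subtype _)
  have hh : ∀ a b, h (a, b) = (a : V) + (b : V) := fun a b => by simp [h]
  have hker : LinearMap.ker h = ⊥ := by
    rw [LinearMap.ker_eq_bot']
    rintro ⟨a, b⟩ hab
    rw [hh] at hab
    have hba : (b : V) = -(a : V) := eq_neg_of_add_eq_zero_right hab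
    have hb : (b : V) ∈ (R ⊓ K) ⊓ (W ⊓ K) :=
      ⟨⟨by rw [hba]; exact R.neg_mem a.2, b.2.2⟩, b.2⟩
    rw [hinf, Submodule.mem_bot] at hb
    rw [hb, add_zero] at hab
    exact Prod.ext (Subtype.ext hab) (Subtype.ext hb)
  obtain ⟨l, hl⟩ := LinearMap.exists_leftInverse_of_injective h hker
  have hl' : ∀ x, l (h x) = x := fun x => LinearMap.congr_fun hl x
  let ψ : V →ₗ[F] Z := (φ.coprod (S'.subtype ∘ₗ κ.toLinearMap)) ∘ₗ l
  have hψ : ∀ a b, ψ (h (a, b)) = φ a + (κ b : Z) := by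
    intro a b
    simp [ψ, hl']
  refine ⟨ψ, fun x => ?_, fun x hx hx0 => ?_⟩
  · have := hψ x 0
    rw [hh] at this
    simpa using this
  · rw [← hsup] at hx
    obtain ⟨a, ha, b, hb, rfl⟩ := Submodule.mem_sup.mp hx
    have h3 := hψ ⟨a, ha.1⟩ ⟨b, hb⟩
    rw [hh] at h3
    simp only [hx0] at h3
    have hφS : φ ⟨a, ha.1⟩ ∈ I.map φ := ⟨⟨a, ha.1⟩, ha.2, rfl⟩
    have hφ0 : φ ⟨a, ha.1⟩ = 0 := by
      have h4 : φ ⟨a, ha.1⟩ = -(κ ⟨b, hb⟩ : Z) := eq_neg_of_add_eq_zero_left h3.symm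
      have h5 : φ ⟨a, ha.1⟩ ∈ I.map φ ⊓ S' := ⟨hφS, by rw [h4]; exact S'.neg_mem (κ ⟨b, hb⟩).2⟩
      rwa [hS'.inf_eq_bot, Submodule.mem_bot] at h5
    rw [hφ0, zero_add] at h3
    have hb0 : κ ⟨b, hb⟩ = 0 := Subtype.ext h3.symm
    rw [LinearEquiv.map_eq_zero_iff] at hb0
    have hb0 : b = 0 := congrArg Subtype.val hb0
    have ha0 : a = 0 := congrArg Subtype.val (hφ ⟨a, ha.1⟩ ha.2 hφ0)
    rw [ha0, hb0, add_zero]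

theorem backward_end (hF : Nonempty (F ≃+* ℚ) ∨ (IsAlgClosed F ∧ CharZero F) ∨
      (∃ p : ℕ, p.Prime ∧ CharP F p)) [Module.Finite F V] (f : Module.End F V)
    (m k : ℕ) (hkm : k < m) (hf : f ^ m = f ^ k)
    (hr : Module.finrank F V ≤ 2 * Module.finrank F (LinearMap.range f)) :
    ∃ T N : Module.End F V, (∃ s : ℕ, 1 ≤ s ∧ T ^ s = 1) ∧ N ^ 2 = 0 ∧ f = T + N := by
  let C' : Module.End F (LinearMap.range f) := f.restrict (fun x _ => LinearMap.mem_range_self f x)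
  have hC' : ∀ x, (C' x : V) = f x := fun x => rfl
  have hpow : ∀ n x, ((C' ^ n) x : V) = (f ^ n) x := fun n x =>
    pow_intertwine C' f (Submodule.subtype _) hC' n x
  have hC : C' ^ m = C' ^ k := by
    ext x
    rw [hpow, hpow, hf]
  have hrn := LinearMap.finrank_range_add_finrank_ker f
  have hker : Module.finrank F (LinearMap.ker C') ≤ Module.finrank F (LinearMap.ker f) := by
    let g : LinearMap.ker C' →ₗ[F] LinearMap.ker f :=
      ((Submodule.subtype _) ∘ₗ (Submodule.subtype _)).codRestrict _ (fun x => by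
        rw [LinearMap.mem_ker]
        show f (x : LinearMap.range f) = 0
        rw [← hC', LinearMap.mem_ker.mp x.2]; rfl)
    refine LinearMap.finrank_le_finrank_of_injective (f := g) ?_
    intro x y h
    have : ((x : LinearMap.range f) : V) = ((y : LinearMap.range f) : V) :=
      congrArg (fun w : LinearMap.ker f => (w : V)) h
    exact Subtype.ext (Subtype.ext this)
  obtain ⟨φ, ν, s, hs, hT⟩ := bord_main (Z := LinearMap.ker f) hF C' m k hkm hC hker (by omega)
  set T := blk C' φ ν with hTd
  have hTinj : ∀ x, T x = 0 → x = 0 := by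
    intro x hx
    have h := LinearMap.congr_fun hT x
    obtain ⟨s, rfl⟩ : ∃ s', s = s' + 1 := ⟨s - 1, by omega⟩
    rw [pow_succ, Module.End.mul_apply, hx, map_zero] at h
    exact h.symm
  obtain ⟨ψ, hψ1, hψ2⟩ := exists_ext (LinearMap.range f) (LinearMap.ker f) φ rfl (by
    intro x hx hx0
    have h : T (x, 0) = 0 := by
      rw [hTd, blk_apply]
      have : C' x = 0 := Subtype.ext hx
      simp [this, hx0]
    exact congrArg Prod.fst (hTinj _ h))
  let P : V →ₗ[F] (LinearMap.range f × LinearMap.ker f) := f.rangeRestrict.prod ψ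
  have hPinj : Function.Injective P := by
    rw [← LinearMap.ker_eq_bot, LinearMap.ker_eq_bot']
    intro x hx
    have h1 : f x = 0 := congrArg (fun y => ((Prod.fst y : LinearMap.range f) : V)) hx
    exact hψ2 x h1 (congrArg Prod.snd hx)
  have hfr : Module.finrank F V = Module.finrank F (LinearMap.range f × LinearMap.ker f) := by
    rw [Module.finrank_prod, hrn]
  let Ψ := LinearEquiv.ofBijective P
    ⟨hPinj, (LinearMap.injective_iff_surjective_of_finrank_eq_finrank hfr).mp hPinj⟩
  have hΨ : ∀ x, Ψ x = (f.rangeRestrict x, ψ x) := fun x => rfl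
  let T' : Module.End F V := Ψ.symm.toLinearMap ∘ₗ T ∘ₗ Ψ.toLinearMap
  have hT' : ∀ x, Ψ (T' x) = T (Ψ x) := fun x => by simp [T']
  have hN : ∀ x, Ψ ((f - T') x) = (- ν (ψ x), 0) := by
    intro x
    rw [LinearMap.sub_apply, map_sub, hT', hTd, blk_apply, hΨ, hΨ]
    have h1 : f.rangeRestrict (f x) = C' (f.rangeRestrict x) := rfl
    have h2 : ψ (f x) = φ (f.rangeRestrict x) := hψ1 (f.rangeRestrict x)
    rw [h1, h2]
    ext <;> simp
  refine ⟨T', f - T', ⟨s, hs, ?_⟩, ?_, by abel⟩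
  · ext x
    apply Ψ.injective
    have := pow_intertwine T' T Ψ.toLinearMap hT' s x
    rw [hT] at this
    exact this
  · ext x
    apply Ψ.injective
    rw [pow_two, Module.End.mul_apply, hN]
    have : ψ ((f - T') x) = 0 := congrArg Prod.snd (hN x)
    rw [this]; simp

theorem backward (hF : Nonempty (F ≃+* ℚ) ∨ (IsAlgClosed F ∧ CharZero F) ∨
      (∃ p : ℕ, p.Prime ∧ CharP F p)) {n : ℕ} (A : Matrix (Fin n) (Fin n) F)
    (m k : ℕ) (hkm : k < m) (hA : A ^ m = A ^ k) (hr : n ≤ 2 * A.rank) :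
    ∃ T N : Matrix (Fin n) (Fin n) F,
      IsUnit T ∧ (∃ s : ℕ, 1 ≤ s ∧ T ^ s = 1) ∧ N ^ 2 = 0 ∧ A = T + N := by
  let a : Matrix (Fin n) (Fin n) F ≃ₐ[F] Module.End F (Fin n → F) := Matrix.toLinAlgEquiv'
  obtain ⟨T, N, ⟨s, hs, hT⟩, hN, h⟩ := backward_end hF (a A) m k hkm
    (by rw [← map_pow, hA, map_pow]) (by rw [Module.finrank_fin_fun]; exact hr)
  have hT' : a.symm T ^ s = 1 := by rw [← map_pow, hT, map_one]
  refine ⟨a.symm T, a.symm N, IsUnit.of_pow_eq_one hT' (by omega), ⟨s, hs, hT'⟩, ?_, ?_⟩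
  · rw [← map_pow, hN, map_zero]
  · rw [← map_add, ← h, AlgEquiv.symm_apply_apply]

theorem forward {n : ℕ} (T N : Matrix (Fin n) (Fin n) F) (hT : IsUnit T) (hN : N ^ 2 = 0) :
    n ≤ 2 * (T + N).rank := by
  have h1 : N.rank + N.rank ≤ n := by
    have := Matrix.rank_add_rank_le_card_of_mul_eq_zero (A := N) (B := N) (by rw [← pow_two, hN])
    simpa using this
  have h2 : T.rank = n := by simpa using Matrix.rank_of_isUnit T hT
  have h3 : T.rank ≤ (T + N).rank + N.rank := by
    have : LinearMap.range T.mulVecLin ≤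
        LinearMap.range (T + N).mulVecLin ⊔ LinearMap.range N.mulVecLin := by
      rintro _ ⟨x, rfl⟩
      refine Submodule.mem_sup.mpr ⟨_, ⟨x, rfl⟩, _, ⟨-x, rfl⟩, ?_⟩
      simp [Matrix.mulVec_neg]
    exact (Submodule.finrank_mono this).trans (Submodule.finrank_add_le_finrank_add_finrank _ _)
  omega

end PTS

/-- Over `ℚ`, an algebraically closed field of characteristic zero, or a
field of prime characteristic, a periodic matrix is the sum of a torsion
matrix and a square-zero matrix if and only if its rank is at least `n/2`. -/
theorem periodic_eq_torsion_add_squareZero_iff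
    {F : Type*} [Field F]
    (hF : Nonempty (F ≃+* ℚ) ∨ (IsAlgClosed F ∧ CharZero F) ∨
      (∃ p : ℕ, p.Prime ∧ CharP F p))
    {n : ℕ} (A : Matrix (Fin n) (Fin n) F)
    (hA : ∃ m k : ℕ, 1 ≤ k ∧ k < m ∧ A ^ m = A ^ k) :
    (∃ T N : Matrix (Fin n) (Fin n) F,
      IsUnit T ∧ (∃ s : ℕ, 1 ≤ s ∧ T ^ s = 1) ∧ N ^ 2 = 0 ∧
      A = T + N) ↔ n ≤ 2 * A.rank := by
  obtain ⟨m, k, _, hkm, hmk⟩ := hA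
  constructor
  · rintro ⟨T, N, hT, _, hN, rfl⟩
    exact PTS.forward T N hT hN
  · exact PTS.backward hF A m k hkm hmk
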